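/- Let M = (Q, A, τ) be an invertible and reversible Mealy automaton and let G = P_M̃ be the automaton group generated by M, with generating set the images of the enriched states Q ⊔ Q⁻¹. If G contains an element of infinite order, then G has exponential growth: there exists a real number c > 1 such that for all n ≥ 1, the number of elements of G expressible as a product of at most n generators is at least cⁿ. -/

import Mathlib

/-!
The argument passes from the group to a finite invertible reversible automaton `N` with a state `q`
no two powers of which act in the same way, and studies the orbits `Lev N q n` of the words `qⁿ`
under the maps `s ↦ s @ u`. Reversibility makes letters act on state words of each length by
permutations, so these orbits are homogeneous.

* The orbit language is closed under factors. Hence the number of left extensions of a word of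
  length `n` is independent of the word and nonincreasing in `n`, so it stabilises at some `d` from
  a length `n₀` on; from there words overlapping in `n₀` letters can be glued (`Orb_glue`).
* Declare two words of `Lev N q n` to be in the same class if they act identically and share their
  first and last `n₀` letters. All classes on a level have the same size, and passing from level `n`
  to `n + 1` multiplies this size by an integer (`clsCard_succ`), which is nondecreasing, since a
  common letter can be appended on the right (`inDeg_le_succ`), and bounded. It stabilises at
  some `r`.
* So the number `z n` of classes eventually satisfies `r * z (n + 1) = d * z n`, and up to a bounded
  factor it is the number of elements of the semigroup represented by `Lev N q n`. If `d ≤ r`, these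
  numbers are bounded, every long power `qⁿ` is a state of an automaton of bounded size, and two powers of `q`
  coincide (`exists_pow_eqv_of_bounded`). Otherwise they grow like `(d / r)ⁿ`
  (`exists_exponential`). The integers `d` and `r` mirror the two halves of the tidying procedure
  for the scale function of totally disconnected locally compact groups.

To find `N`: if some state of `M` has infinite order, take `N = M`. If all states have finite order,
the enriched automaton is itself reversible (`enriched_reversible`), and `N` is the power of it
that has a word representing the given element of infinite order as a state.
-/

namespace AutGrp

/-- A Mealy automaton with state set `Q` and alphabet `A`:
`step q a = (q · a, q @ a)` (output letter, next state). -/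
structure Mealy (Q A : Type*) where
  step : Q → A → A × Q

namespace Mealy

variable {Q A : Type*}

/-- The output letter `q · a`. -/
def o (M : Mealy Q A) (q : Q) (a : A) : A := (M.step q a).1

/-- The next state `q @ a`. -/
def t (M : Mealy Q A) (q : Q) (a : A) : Q := (M.step q a).2

/-- Action of a single state on a word of letters: `q · w`. -/
def actA (M : Mealy Q A) : Q → List A → List A
  | _, [] => []
  | q, a :: w => M.o q a :: M.actA (M.t q a) w

/-- State reached from `q` after reading the word `w`: `q @ w`. -/
def stA (M : Mealy Q A) : Q → List A → Q
  | q, [] => q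
  | q, a :: w => M.stA (M.t q a) w

/-- Action of a word of states on a word of letters: `s · u` (rightmost state acts first). -/
def actW (M : Mealy Q A) : List Q → List A → List A
  | [], u => u
  | q :: s, u => M.actA q (M.actW s u)

/-- Word of states reached after reading `u`: `s @ u`. -/
def stW (M : Mealy Q A) : List Q → List A → List Q
  | [], _ => []
  | q :: s, u => M.stA q (M.actW s u) :: M.stW s u

/-- `M` is invertible if each state acts on `A` by a bijection. -/
def Invertible (M : Mealy Q A) : Prop := ∀ q : Q, Function.Bijective (M.o q)

/-- `M` is reversible if each letter acts on `Q` by a bijection. -/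
def Reversible (M : Mealy Q A) : Prop := ∀ a : A, Function.Bijective (fun q => M.t q a)

theorem actA_append (M : Mealy Q A) (q : Q) (x y : List A) :
    M.actA q (x ++ y) = M.actA q x ++ M.actA (M.stA q x) y := by
  induction x generalizing q with
  | nil => simp [actA, stA]
  | cons a w ih => simp [actA, stA, ih]

theorem stA_append (M : Mealy Q A) (q : Q) (x y : List A) :
    M.stA q (x ++ y) = M.stA (M.stA q x) y := by
  induction x generalizing q with
  | nil => simp [stA]
  | cons a w ih => simp [stA, ih]

theorem actW_append_states (M : Mealy Q A) (s u : List Q) (w : List A) :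
    M.actW (s ++ u) w = M.actW s (M.actW u w) := by
  induction s with
  | nil => simp [actW]
  | cons q s ih => simp [actW, ih]

theorem actW_append (M : Mealy Q A) (s : List Q) (x y : List A) :
    M.actW s (x ++ y) = M.actW s x ++ M.actW (M.stW s x) y := by
  induction s with
  | nil => simp [actW, stW]
  | cons q s ih => simp [actW, stW, ih, actA_append]

theorem stW_append (M : Mealy Q A) (s : List Q) (x y : List A) :
    M.stW s (x ++ y) = M.stW (M.stW s x) y := by
  induction s with
  | nil => simp [stW]
  | cons q s ih => simp [stW, actW, ih, actW_append, stA_append]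

theorem actW_stW_congr (M : Mealy Q A) {p p' : List Q}
    (h : ∀ w : List A, M.actW p w = M.actW p' w) (u w : List A) :
    M.actW (M.stW p u) w = M.actW (M.stW p' u) w := by
  have h1 := M.actW_append p u w
  have h2 := M.actW_append p' u w
  rw [h u, h (u ++ w)] at h1
  rw [h1] at h2
  exact List.append_cancel_left h2

/-- The congruence `~Q` on the free monoid `Q*`: two words of states are equivalent
iff they act identically on `A*`. -/
def conQ (M : Mealy Q A) : Con (FreeMonoid Q) where
  r s u := ∀ w : List A, M.actW s.toList w = M.actW u.toList w
  iseqv := ⟨fun _ _ => rfl, fun h w => (h w).symm, fun h1 h2 w => (h1 w).trans (h2 w)⟩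
  mul' := by
    intro a b c d h1 h2 w
    simp only [FreeMonoid.toList_mul, actW_append_states]
    rw [h2 w, h1 (M.actW d.toList w)]

/-- The congruence `~A` on the free monoid `A*`: `u ~A v` iff `s @ u = s @ v` for all `s ∈ Q*`. -/
def conA (M : Mealy Q A) : Con (FreeMonoid A) where
  r u v := ∀ s : List Q, M.stW s u.toList = M.stW s v.toList
  iseqv := ⟨fun _ _ => rfl, fun h s => (h s).symm, fun h1 h2 s => (h1 s).trans (h2 s)⟩
  mul' := by
    intro a b c d h1 h2 s
    simp only [FreeMonoid.toList_mul, stW_append]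
    rw [h1 s, h2 (M.stW s b.toList)]

/-- The congruence `~D` on the free monoid `A*`: `u ~D v` iff `s @ u ~Q s @ v` for all `s ∈ Q*`. -/
def conD (M : Mealy Q A) : Con (FreeMonoid A) where
  r u v := ∀ (s : List Q) (w : List A),
    M.actW (M.stW s u.toList) w = M.actW (M.stW s v.toList) w
  iseqv := ⟨fun _ _ _ => rfl, fun h s w => (h s w).symm,
    fun h1 h2 s w => (h1 s w).trans (h2 s w)⟩
  mul' := by
    intro a b c d h1 h2 s w
    simp only [FreeMonoid.toList_mul, stW_append]
    calc M.actW (M.stW (M.stW s a.toList) c.toList) w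
        = M.actW (M.stW (M.stW s b.toList) c.toList) w :=
          M.actW_stW_congr (h1 s) c.toList w
      _ = M.actW (M.stW (M.stW s b.toList) d.toList) w := h2 _ w

/-- The automaton semigroup (monoid) `P_M = Q* / ~Q`. -/
abbrev PM (M : Mealy Q A) : Type _ := M.conQ.Quotient

/-- The dual automaton semigroup (monoid) `D_M = A* / ~A`. -/
abbrev DM (M : Mealy Q A) : Type _ := M.conA.Quotient

/-- The monoid `D'_M = A* / ~D`. -/
abbrev DM' (M : Mealy Q A) : Type _ := M.conD.Quotient

/-- The class in `P_M` of a word of states. -/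
def PMmk (M : Mealy Q A) (s : List Q) : M.PM := M.conQ.mk' (FreeMonoid.ofList s)

/-- The class in `D_M` of a word of letters. -/
def DMmk (M : Mealy Q A) (u : List A) : M.DM := M.conA.mk' (FreeMonoid.ofList u)

/-- The class in `D'_M` of a word of letters. -/
def DM'mk (M : Mealy Q A) (u : List A) : M.DM' := M.conD.mk' (FreeMonoid.ofList u)

/-- `M` is self-invertible if `P_M` is a group. -/
def SelfInvertible (M : Mealy Q A) : Prop :=
  ∀ x : M.PM, ∃ y : M.PM, x * y = 1 ∧ y * x = 1

/-- The enriched automaton of an invertible automaton: states `Q ⊕ Q`, where `Sum.inl q` is `q`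
and `Sum.inr q` is the formal inverse `q⁻¹`; `τ̃(q,a) = τ(q,a)` and
`τ̃(q⁻¹, q·a) = (a, (q@a)⁻¹)`. -/
noncomputable def enriched [Nonempty A] (M : Mealy Q A) : Mealy (Q ⊕ Q) A where
  step := fun p b =>
    match p with
    | Sum.inl q => (M.o q b, Sum.inl (M.t q b))
    | Sum.inr q =>
        (Function.invFun (M.o q) b, Sum.inr (M.t q (Function.invFun (M.o q) b)))

/-- The monoid `Δ_M` presented by generators `Q ⊔ A` and relations `q a = (q·a)(q@a)`. -/
def deltaCon (M : Mealy Q A) : Con (FreeMonoid (Q ⊕ A)) :=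
  conGen (fun w₁ w₂ => ∃ (q : Q) (a : A),
    w₁ = FreeMonoid.of (Sum.inl q) * FreeMonoid.of (Sum.inr a) ∧
    w₂ = FreeMonoid.of (Sum.inr (M.o q a)) * FreeMonoid.of (Sum.inl (M.t q a)))

end Mealy

/-- Evaluation of a positive word in the letters `y` (for `true`) and `z` (for `false`). -/
def evalPair {S : Type*} [Monoid S] (y z : S) : List Bool → S
  | [] => 1
  | b :: l => (bif b then y else z) * evalPair y z l

/-- `y` and `z` freely generate a free subsemigroup of rank two: distinct nonempty
positive words in `y, z` represent distinct elements. -/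
def IsFreePair {S : Type*} [Monoid S] (y z : S) : Prop :=
  ∀ l₁ l₂ : List Bool, l₁ ≠ [] → l₂ ≠ [] →
    evalPair y z l₁ = evalPair y z l₂ → l₁ = l₂

/-- `x` has infinite order: `{x, x², x³, …}` is infinite. -/
def InfiniteOrder {S : Type*} [Monoid S] (x : S) : Prop :=
  (Set.range fun n : ℕ => x ^ (n + 1)).Infinite

/-- The length-`n` prefix of a sequence. -/
def seqTake {A : Type*} (ξ : ℕ → A) (n : ℕ) : List A := (List.range n).map ξ

/-- The `n`-th power `u^n` of a finite word. -/
def wpow {A : Type*} (u : List A) : ℕ → List A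
  | 0 => []
  | n + 1 => u ++ wpow u n

/-- The eventually periodic sequence `u v v v ⋯`. -/
noncomputable def prePeriodic {A : Type*} [Nonempty A] (u v : List A) : ℕ → A :=
  fun n => if n < u.length then u.getD n (Classical.arbitrary A)
    else v.getD ((n - u.length) % v.length) (Classical.arbitrary A)

/-- The periodic sequence `u^ω = u u u ⋯`. -/
noncomputable def periodic {A : Type*} [Nonempty A] (u : List A) : ℕ → A :=
  prePeriodic [] u

namespace Mealy

/-- The action of a word of states on a sequence: `s · ξ` is the sequence whose
length-`n` prefix is `s · (length-`n` prefix of `ξ`)`. -/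
noncomputable def actSeq {Q A : Type*} [Nonempty A] (M : Mealy Q A)
    (s : List Q) (ξ : ℕ → A) : ℕ → A :=
  fun n => (M.actW s (seqTake ξ (n + 1))).getD n (Classical.arbitrary A)

/-- The language of all prefixes of the orbit of `a^ω` under `P_M`. -/
def Lan {Q A : Type*} (M : Mealy Q A) (a : A) : Set (List A) :=
  {v | ∃ (k : ℕ) (s : List Q), v = M.actW s (List.replicate k a)}

/-- The degree of `v` in `Lan(a)`: the number of letters `b` with `v b ∈ Lan(a)`. -/
noncomputable def deg {Q A : Type*} (M : Mealy Q A) (a : A) (v : List A) : ℕ :=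
  {b : A | v ++ [b] ∈ M.Lan a}.ncard

end Mealy

/-- A language is regular if it is recognized by a deterministic finite automaton. -/
def IsRegular {A : Type*} (L : Set (List A)) : Prop :=
  ∃ (σ : Type) (_ : Fintype σ) (dfa : DFA A σ), ∀ w : List A, w ∈ dfa.accepts ↔ w ∈ L


/-! ### Basic properties of the two actions -/

namespace Mealy

section Basic

variable {S A : Type*} (N : Mealy S A)

/-- `s ~ t`: the words of states `s` and `t` act identically. -/
def Eqv (s t : List S) : Prop := ∀ u : List A, N.actW s u = N.actW t u

theorem PMmk_eq_iff (s t : List S) : N.PMmk s = N.PMmk t ↔ N.Eqv s t :=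
  Con.eq _

theorem PMmk_append (s t : List S) : N.PMmk (s ++ t) = N.PMmk s * N.PMmk t := by
  simp [PMmk, FreeMonoid.ofList_append]

theorem PMmk_nil : N.PMmk [] = 1 := by
  simp [PMmk]

theorem actW_nil_right (s : List S) : N.actW s [] = [] := by
  induction s with
  | nil => rfl
  | cons q s ih => simp [actW, ih, actA]

theorem stW_nil_right (s : List S) : N.stW s [] = s := by
  induction s with
  | nil => rfl
  | cons q s ih => simp [stW, ih, actW_nil_right, stA]

theorem stW_length (s : List S) (u : List A) : (N.stW s u).length = s.length := by
  induction s with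
  | nil => rfl
  | cons q s ih => simp [stW, ih]

theorem stW_append_states (s t : List S) (u : List A) :
    N.stW (s ++ t) u = N.stW s (N.actW t u) ++ N.stW t u := by
  induction s with
  | nil => rfl
  | cons q s ih => simp [stW, ih, actW_append_states]

theorem drop_stW (k : ℕ) (s : List S) (u : List A) :
    (N.stW s u).drop k = N.stW (s.drop k) u := by
  induction k generalizing s with
  | zero => simp
  | succ k ih => cases s with
    | nil => rfl
    | cons q s => simp [stW, ih]

theorem take_stW (k : ℕ) (s : List S) (u : List A) :
    (N.stW s u).take k = N.stW (s.take k) (N.actW (s.drop k) u) := by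
  induction k generalizing s with
  | zero => simp [stW]
  | succ k ih => cases s with
    | nil => rfl
    | cons q s =>
      simp only [stW, List.take_succ_cons, List.drop_succ_cons, ih, ← actW_append_states,
        List.take_append_drop]

theorem Eqv.stW {N : Mealy S A} {s t : List S} (h : N.Eqv s t) (u : List A) :
    N.Eqv (N.stW s u) (N.stW t u) :=
  fun w => N.actW_stW_congr h u w

theorem Eqv.append {N : Mealy S A} {s s' t t' : List S} (h : N.Eqv s s') (h' : N.Eqv t t') :
    N.Eqv (s ++ t) (s' ++ t') := by
  intro u
  rw [actW_append_states, actW_append_states, h', h]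

theorem Eqv.refl (s : List S) : N.Eqv s s := fun _ => rfl

variable {N}

theorem actA_injective (hinv : N.Invertible) (q : S) : Function.Injective (N.actA q) := by
  intro u v h
  induction u generalizing q v with
  | nil => cases v with
    | nil => rfl
    | cons b v => simp [actA] at h
  | cons a u ih => cases v with
    | nil => simp [actA] at h
    | cons b v =>
      simp only [actA, List.cons.injEq] at h
      obtain rfl := (hinv q).1 h.1
      rw [ih _ h.2]

theorem actW_injective (hinv : N.Invertible) (s : List S) : Function.Injective (N.actW s) := by
  intro u v h
  induction s with
  | nil => exact h
  | cons q s ih => exact ih (actA_injective hinv q h)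

theorem Eqv.cancel_left (hinv : N.Invertible) {s t t' : List S}
    (h : N.Eqv (s ++ t) (s ++ t')) : N.Eqv t t' := by
  intro u
  have := h u
  rw [actW_append_states, actW_append_states] at this
  exact actW_injective hinv s this

theorem stA_injective (hrev : N.Reversible) (u : List A) :
    Function.Injective (fun q => N.stA q u) := by
  induction u with
  | nil => exact fun _ _ h => h
  | cons a u ih => exact fun p q h => (hrev a).1 (ih h)

theorem stW_injective (hrev : N.Reversible) (u : List A) :
    Function.Injective (fun s => N.stW s u) := by
  intro s t h
  induction s generalizing t with
  | nil => cases t with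
    | nil => rfl
    | cons p t => simp [stW] at h
  | cons q s ih => cases t with
    | nil => simp [stW] at h
    | cons p t =>
      simp only [stW, List.cons.injEq] at h
      obtain rfl := ih h.2
      rw [stA_injective hrev _ h.1]

/-- Letters permute the finite set of state words of a given length, so every move `w ↦ w @ u`
can be undone by a further word of letters, on either side. -/
theorem exists_stW_return [Finite S] (hrev : N.Reversible) (w : List S) (u : List A) :
    ∃ u', N.stW (N.stW w u) u' = w ∧ N.stW (N.stW w u') u = w := by
  set f : List S → List S := fun s => N.stW s u with hf
  have hlen : ∀ j : ℕ, f^[j] w ∈ {l : List S | l.length = w.length} := by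
    intro j
    induction j with
    | zero => simp
    | succ j ih =>
      rw [Function.iterate_succ_apply']
      exact (N.stW_length _ _).trans ih
  obtain ⟨i, j, hij, h⟩ := Set.Finite.exists_lt_map_eq_of_forall_mem hlen
    (List.finite_length_eq S w.length)
  obtain ⟨k, rfl⟩ : ∃ k, j = i + (k + 1) := ⟨j - i - 1, by omega⟩
  rw [Function.iterate_add_apply] at h
  have hk : f^[k + 1] w = w := ((stW_injective hrev u).iterate i h).symm
  have hpow : ∀ (k : ℕ) (s : List S), ∃ v, v = (List.replicate k u).flatten ∧
      f^[k] s = N.stW s v := by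
    intro k
    induction k with
    | zero => exact fun s => ⟨_, rfl, by simp [stW_nil_right]⟩
    | succ k ih =>
      intro s
      obtain ⟨v, rfl, hv⟩ := ih (f s)
      refine ⟨_, rfl, ?_⟩
      rw [Function.iterate_succ_apply, hv, List.replicate_succ, List.flatten_cons, stW_append]
  refine ⟨(List.replicate k u).flatten, ?_, ?_⟩
  · obtain ⟨v, rfl, hv⟩ := hpow k (f w)
    rw [← hv, ← Function.iterate_succ_apply, hk]
  · obtain ⟨v, rfl, hv⟩ := hpow k w
    rw [← hv]
    exact (Function.iterate_succ_apply' f k w).symm.trans hk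

end Basic

/-! ### The orbit language of a state -/

section Orbit

variable {S A : Type*} {N : Mealy S A} {q : S}

/-- The union over `n` of the orbits of `qⁿ` under the right action `s ↦ s @ u` of `A*`. -/
def Orb (N : Mealy S A) (q : S) : Set (List S) :=
  {w | ∃ u, w = N.stW (List.replicate w.length q) u}

theorem replicate_mem_Orb (n : ℕ) : List.replicate n q ∈ N.Orb q :=
  ⟨[], by simp [stW_nil_right]⟩

theorem stW_mem_Orb {w : List S} (hw : w ∈ N.Orb q) (u : List A) : N.stW w u ∈ N.Orb q := by
  obtain ⟨v, hv⟩ := hw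
  refine ⟨v ++ u, ?_⟩
  rw [stW_length, stW_append, ← hv]

theorem right_mem_Orb {x y : List S} (h : x ++ y ∈ N.Orb q) : y ∈ N.Orb q := by
  obtain ⟨u, hu⟩ := h
  refine ⟨u, ?_⟩
  have := congrArg (List.drop x.length) hu
  rw [drop_stW] at this
  simpa using this

theorem left_mem_Orb {x y : List S} (h : x ++ y ∈ N.Orb q) : x ∈ N.Orb q := by
  obtain ⟨u, hu⟩ := h
  have := congrArg (List.take x.length) hu
  rw [take_stW] at this
  simp only [List.take_left', List.length_append, List.take_replicate] at this
  rw [min_eq_left (by omega)] at this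
  exact ⟨_, this⟩

/-- `A*` acts transitively on each level of the orbit language. -/
theorem Orb_trans [Finite S] (hrev : N.Reversible) {w w' : List S} (hw : w ∈ N.Orb q)
    (hw' : w' ∈ N.Orb q) (h : w.length = w'.length) : ∃ u, N.stW w u = w' := by
  obtain ⟨u, hu⟩ := hw
  obtain ⟨v, hv⟩ := hw'
  obtain ⟨u', h1, -⟩ := exists_stW_return hrev (List.replicate w.length q) u
  refine ⟨u' ++ v, ?_⟩
  rw [stW_append, hu, h1, h, ← hv]

/-- The letters extending `w` to the left inside the orbit language. -/
def ext (N : Mealy S A) (q : S) (w : List S) : Set S := {p | p :: w ∈ N.Orb q}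

theorem ncard_ext_eq [Finite S] (hrev : N.Reversible) {w w' : List S} (hw : w ∈ N.Orb q)
    (hw' : w' ∈ N.Orb q) (h : w.length = w'.length) :
    (N.ext q w).ncard = (N.ext q w').ncard := by
  have key : ∀ {w w' : List S}, w ∈ N.Orb q → w' ∈ N.Orb q → w.length = w'.length →
      (N.ext q w).ncard ≤ (N.ext q w').ncard := by
    intro w w' hw hw' h
    obtain ⟨u, rfl⟩ := Orb_trans hrev hw hw' h
    refine Set.ncard_le_ncard_of_injOn (fun p => N.stA p (N.actW w u)) ?_
      (stA_injective hrev _).injOn (Set.toFinite _)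
    intro p hp
    exact stW_mem_Orb (w := p :: w) hp u
  exact le_antisymm (key hw hw' h) (key hw' hw h.symm)

/-- The number of left extensions of a word of length `n` in the orbit language. -/
noncomputable def extDeg (N : Mealy S A) (q : S) (n : ℕ) : ℕ :=
  (N.ext q (List.replicate n q)).ncard

theorem ncard_ext [Finite S] (hrev : N.Reversible) {w : List S} (hw : w ∈ N.Orb q) :
    (N.ext q w).ncard = N.extDeg q w.length :=
  ncard_ext_eq hrev hw (replicate_mem_Orb _) (by simp)

theorem ext_append_subset (x v : List S) : N.ext q (x ++ v) ⊆ N.ext q x :=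
  fun p hp => left_mem_Orb (x := p :: x) (y := v) hp

/-- The orbit language is closed under prefixes, so longer words have fewer left extensions. -/
theorem extDeg_antitone [Finite S] : Antitone (N.extDeg q) := by
  refine antitone_nat_of_succ_le fun n => ?_
  unfold extDeg
  rw [List.replicate_succ']
  exact Set.ncard_le_ncard (ext_append_subset _ _) (Set.toFinite _)

theorem extDeg_pos [Finite S] (n : ℕ) : 0 < N.extDeg q n :=
  (Set.ncard_pos (Set.toFinite _)).2 ⟨q, replicate_mem_Orb (n + 1)⟩

/-- Once the extension degrees have stabilised (from `n₀` on), membership in the orbit language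
is a local condition: two words overlapping in at least `n₀` letters can be glued. -/
theorem Orb_glue [Finite S] (hrev : N.Reversible) {n₀ : ℕ}
    (hd : ∀ n, n₀ ≤ n → N.extDeg q n = N.extDeg q n₀) {a x v : List S} (hx : n₀ ≤ x.length)
    (hax : a ++ x ∈ N.Orb q) (hxv : x ++ v ∈ N.Orb q) : a ++ (x ++ v) ∈ N.Orb q := by
  induction a with
  | nil => exact hxv
  | cons p a ih =>
    have h1 : a ++ x ∈ N.Orb q := right_mem_Orb (x := [p]) hax
    have h2 := ih h1
    rw [← List.append_assoc] at h2
    have h3 : N.ext q (a ++ x ++ v) = N.ext q (a ++ x) := by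
      refine Set.eq_of_subset_of_ncard_le (ext_append_subset _ _) ?_ (Set.toFinite _)
      rw [ncard_ext hrev h1, ncard_ext hrev h2, hd (a ++ x).length (by simp; omega),
        hd (a ++ x ++ v).length (by simp; omega)]
    have h4 : p ∈ N.ext q (a ++ x ++ v) := h3 ▸ hax
    rw [List.append_assoc] at h4
    exact h4

/-- The words of length `n` in the orbit language: the orbit of `qⁿ`. -/
def Lev (N : Mealy S A) (q : S) (n : ℕ) : Set (List S) := {w | w ∈ N.Orb q ∧ w.length = n}

theorem Lev_finite [Finite S] (n : ℕ) : (N.Lev q n).Finite :=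
  (List.finite_length_eq S n).subset fun _ h => h.2

end Orbit

/-! ### Counting words and classes in the orbit language -/

section Count

theorem ncard_eq_mul_of_fiber {α β : Type*} {s : Set α} (hs : s.Finite) (f : α → β) (k : ℕ)
    (h : ∀ a ∈ s, {b ∈ s | f b = f a}.ncard = k) : s.ncard = k * (f '' s).ncard := by
  classical
  obtain ⟨s, rfl⟩ := hs.exists_finset_coe
  have him : f '' (s : Set α) = ((s.image f : Finset β) : Set β) := by simp
  rw [him, Set.ncard_coe_finset, Set.ncard_coe_finset,
    Finset.card_eq_sum_card_fiberwise (f := f) (s := s) (t := s.image f)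
      (fun a ha => Finset.mem_coe.2 (Finset.mem_image_of_mem f ha)),
    Finset.sum_const_nat (m := k), mul_comm]
  intro b hb
  obtain ⟨a, ha, rfl⟩ := Finset.mem_image.1 hb
  rw [← h a ha, ← Set.ncard_coe_finset]
  simp

theorem ncard_image_le_of_factors {α β γ : Type*} (s : Set α) (f : α → β) (g : α → γ)
    (hg : (g '' s).Finite) (h : ∀ a b, g a = g b → f a = f b) :
    (f '' s).ncard ≤ (g '' s).ncard := by
  classical
  by_cases hs : s.Nonempty
  · obtain ⟨a₀, -⟩ := hs
    have : f '' s = (Function.extend g f fun _ => f a₀) '' (g '' s) := by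
      rw [Set.image_image]
      refine Set.image_congr fun a _ => ?_
      exact (Function.FactorsThrough.extend_apply (fun a b hab => h a b hab) _ a).symm
    rw [this]
    exact Set.ncard_image_le hg
  · simp [Set.not_nonempty_iff_eq_empty.1 hs]

/-- A nonincreasing sequence of natural numbers is eventually constant. -/
theorem exists_stable_of_antitone (d : ℕ → ℕ) (m : ℕ) (h : ∀ n, m ≤ n → d (n + 1) ≤ d n) :
    ∃ n₀, m ≤ n₀ ∧ ∀ n, n₀ ≤ n → d n = d n₀ := by
  have hanti : Antitone fun n => d (m + n) := antitone_nat_of_succ_le fun n => h (m + n) (by omega)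
  set i := Function.argmin (fun n => d (m + n)) with hi
  refine ⟨m + i, by omega, fun n hn => le_antisymm ?_ ?_⟩
  · have := hanti (show i ≤ n - m by omega)
    simpa [show m + (n - m) = n by omega] using this
  · have := Function.argmin_le (fun n => d (m + n)) (n - m)
    simpa [show m + (n - m) = n by omega] using this

variable {S A : Type*} {N : Mealy S A} {q : S}

theorem Lev_ncard_succ [Finite S] (hrev : N.Reversible) (n : ℕ) :
    (N.Lev q (n + 1)).ncard = N.extDeg q n * (N.Lev q n).ncard := by
  have him : List.tail '' (N.Lev q (n + 1)) = N.Lev q n := by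
    ext w
    constructor
    · rintro ⟨v, ⟨hv, hl⟩, rfl⟩
      cases v with
      | nil => simp at hl
      | cons p v => exact ⟨right_mem_Orb (x := [p]) hv, by simpa using hl⟩
    · rintro ⟨hw, rfl⟩
      obtain ⟨p, hp⟩ : (N.ext q w).Nonempty := by
        rw [← Set.ncard_pos (Set.toFinite _), ncard_ext hrev hw]
        exact extDeg_pos _
      exact ⟨p :: w, ⟨hp, rfl⟩, rfl⟩
  rw [ncard_eq_mul_of_fiber (Lev_finite _) List.tail (N.extDeg q n), him]
  rintro v ⟨hv, hl⟩
  cases v with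
  | nil => simp at hl
  | cons p v =>
    have hv' : v ∈ N.Orb q := right_mem_Orb (x := [p]) hv
    have hl' : v.length = n := by simpa using hl
    rw [← hl', ← ncard_ext hrev hv']
    have : {b ∈ N.Lev q (v.length + 1) | b.tail = (p :: v).tail} =
        (fun r => r :: v) '' N.ext q v := by
      ext w
      constructor
      · rintro ⟨⟨hw, hwl⟩, ht⟩
        cases w with
        | nil => simp at hwl
        | cons r w =>
          obtain rfl : w = v := ht
          exact ⟨r, hw, rfl⟩
      · rintro ⟨r, hr, rfl⟩
        exact ⟨⟨hr, rfl⟩, rfl⟩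
    rw [this, Set.ncard_image_of_injective _ (fun a b h => by simpa using h)]

/-- The words of the orbit language equivalent to `w` and sharing with it the first `n₀` and the
last `n₀` letters. -/
def Cls (N : Mealy S A) (q : S) (n₀ : ℕ) (w : List S) : Set (List S) :=
  {v | v ∈ N.Orb q ∧ v.length = w.length ∧ v.take n₀ = w.take n₀ ∧
    v.drop (w.length - n₀) = w.drop (w.length - n₀) ∧ N.Eqv v w}

theorem Cls_finite [Finite S] (n₀ : ℕ) (w : List S) : (N.Cls q n₀ w).Finite :=
  (List.finite_length_eq S w.length).subset fun _ h => h.2.1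

theorem mem_Cls_self {n₀ : ℕ} {w : List S} (hw : w ∈ N.Orb q) : w ∈ N.Cls q n₀ w :=
  ⟨hw, rfl, rfl, rfl, Eqv.refl N w⟩

theorem ncard_Cls_eq [Finite S] (hinv : N.Invertible) (hrev : N.Reversible) (n₀ : ℕ)
    {w w' : List S} (hw : w ∈ N.Orb q) (hw' : w' ∈ N.Orb q) (h : w.length = w'.length) :
    (N.Cls q n₀ w).ncard = (N.Cls q n₀ w').ncard := by
  have key : ∀ {w w' : List S}, w ∈ N.Orb q → w' ∈ N.Orb q → w.length = w'.length →
      (N.Cls q n₀ w).ncard ≤ (N.Cls q n₀ w').ncard := by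
    intro w w' hw hw' h
    obtain ⟨u, rfl⟩ := Orb_trans hrev hw hw' h
    refine Set.ncard_le_ncard_of_injOn (fun v => N.stW v u) ?_
      (stW_injective hrev _).injOn (Cls_finite _ _)
    rintro v ⟨hv, hl, ht, hd, he⟩
    refine ⟨stW_mem_Orb hv u, by simp [stW_length, hl], ?_, ?_, he.stW u⟩
    · -- Cancelling the common prefix, the remaining suffixes of `v` and `w` act alike on `u`,
      -- so the prefix is moved by the same word of letters in both.
      have h1 : N.Eqv (w.take n₀ ++ v.drop n₀) (w.take n₀ ++ w.drop n₀) := by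
        rw [← ht, List.take_append_drop, ht, List.take_append_drop]
        exact he
      rw [take_stW, take_stW, ht, (h1.cancel_left hinv) u]
    · rw [stW_length, drop_stW, drop_stW, hd]
  exact le_antisymm (key hw hw' h) (key hw' hw h.symm)

/-- The common size of the sets `Cls N q n₀ w`, for `w` of length `n` in the orbit language. -/
noncomputable def clsCard (N : Mealy S A) (q : S) (n₀ n : ℕ) : ℕ :=
  (N.Cls q n₀ (List.replicate n q)).ncard

theorem ncard_Cls [Finite S] (hinv : N.Invertible) (hrev : N.Reversible) (n₀ : ℕ)
    {w : List S} (hw : w ∈ N.Orb q) : (N.Cls q n₀ w).ncard = N.clsCard q n₀ w.length :=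
  ncard_Cls_eq hinv hrev n₀ hw (replicate_mem_Orb _) (by simp)

theorem clsCard_pos [Finite S] (n₀ n : ℕ) : 0 < N.clsCard q n₀ n :=
  (Set.ncard_pos (Cls_finite _ _)).2 ⟨_, mem_Cls_self (replicate_mem_Orb n)⟩

/-- The number of length-`(n₀ + 1)` prefixes occurring in `Cls N q n₀ (qⁿ)`. For `n > n₀` this
counts the classes of level `n - 1` from which the class of `qⁿ` is reached by prepending a
letter. -/
noncomputable def inDeg (N : Mealy S A) (q : S) (n₀ n : ℕ) : ℕ :=
  (List.take (n₀ + 1) '' N.Cls q n₀ (List.replicate n q)).ncard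

theorem inDeg_bounded [Finite S] (n₀ n : ℕ) :
    N.inDeg q n₀ n ≤ {l : List S | l.length ≤ n₀ + 1}.ncard := by
  refine Set.ncard_le_ncard ?_ (List.finite_length_le S _)
  rintro _ ⟨v, -, rfl⟩
  simp

theorem inDeg_pos [Finite S] (n₀ n : ℕ) : 0 < N.inDeg q n₀ n :=
  (Set.ncard_pos ((Cls_finite _ _).image _)).2
    ⟨_, _, mem_Cls_self (replicate_mem_Orb n), rfl⟩

/-- Words in the class of `p :: t` with the same `n₀ + 1` first letters as a given one `p' :: t'`
are exactly the words `p' :: v` with `v` in the class of `t'`. -/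
theorem clsCard_succ [Finite S] (hinv : N.Invertible) (hrev : N.Reversible) {n₀ : ℕ}
    (hd : ∀ n, n₀ ≤ n → N.extDeg q n = N.extDeg q n₀) {n : ℕ} (hn : n₀ ≤ n) :
    N.clsCard q n₀ (n + 1) = N.clsCard q n₀ n * N.inDeg q n₀ (n + 1) := by
  refine ncard_eq_mul_of_fiber (Cls_finite _ _) (List.take (n₀ + 1)) _ ?_
  set w := List.replicate (n + 1) q with hw
  have hwl : w.length = n + 1 := by simp [hw]
  rintro v ⟨hv, hl, ht, hdr, he⟩
  rw [hwl] at hl hdr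
  cases v with
  | nil => simp at hl
  | cons p v =>
    have hv' : v ∈ N.Orb q := right_mem_Orb (x := [p]) hv
    have hl' : v.length = n := by simpa using hl
    have hsub : n + 1 - n₀ = (n - n₀) + 1 := by omega
    have : {b ∈ N.Cls q n₀ w | b.take (n₀ + 1) = (p :: v).take (n₀ + 1)} =
        (fun t => p :: t) '' N.Cls q n₀ v := by
      ext b
      constructor
      · rintro ⟨⟨hb, hbl, hbt, hbd, hbe⟩, hlab⟩
        rw [hwl] at hbl hbd
        cases b with
        | nil => simp at hbl
        | cons p' b =>
          simp only [List.take_succ_cons, List.cons.injEq] at hlab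
          obtain ⟨rfl, hlab⟩ := hlab
          refine ⟨b, ⟨right_mem_Orb (x := [p']) hb, ?_, hlab, ?_, ?_⟩, rfl⟩
          · simp at hbl; omega
          · rw [← hdr, hsub] at hbd
            simpa [hl'] using hbd
          · have h1 : N.Eqv ([p'] ++ b) ([p'] ++ v) := fun u => (hbe u).trans (he u).symm
            exact h1.cancel_left hinv
      · rintro ⟨b, ⟨hb, hbl, hbt, hbd, hbe⟩, rfl⟩
        have hcons : (p :: b).take (n₀ + 1) = (p :: v).take (n₀ + 1) := by simp [hbt]
        refine ⟨⟨?_, ?_, ?_, ?_, ?_⟩, hcons⟩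
        · have h1 : [p] ++ b.take n₀ ∈ N.Orb q := by
            rw [hbt]
            refine left_mem_Orb (y := v.drop n₀) ?_
            simpa using hv
          have h2 := Orb_glue hrev hd (a := [p]) (x := b.take n₀) (v := b.drop n₀)
            (by simp; omega) h1 (by simpa using hb)
          simpa using h2
        · simp [hwl, hbl, hl']
        · have := congrArg (List.take n₀) hcons
          rw [List.take_take, List.take_take, min_eq_left (by omega)] at this
          exact this.trans ht
        · rw [hwl, ← hdr, hsub, List.drop_succ_cons, List.drop_succ_cons, ← hl']
          exact hbd
        · exact fun u => (Eqv.append (Eqv.refl N [p]) hbe u).trans (he u)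
    change {b ∈ N.Cls q n₀ w | b.take (n₀ + 1) = (p :: v).take (n₀ + 1)}.ncard = _
    rw [this, Set.ncard_image_of_injective _ (fun a b h => by simpa using h),
      ncard_Cls hinv hrev n₀ hv', hl']

/-- Appending `q` on the right maps `Cls N q n₀ (qⁿ)` into `Cls N q n₀ (qⁿ⁺¹)` and preserves long
prefixes. -/
theorem inDeg_le_succ [Finite S] (hrev : N.Reversible) {n₀ : ℕ}
    (hd : ∀ n, n₀ ≤ n → N.extDeg q n = N.extDeg q n₀) {n : ℕ} (hn : n₀ + 1 ≤ n) :
    N.inDeg q n₀ n ≤ N.inDeg q n₀ (n + 1) := by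
  refine Set.ncard_le_ncard ?_ ((Cls_finite _ _).image _)
  rintro _ ⟨v, ⟨hv, hl, ht, hdr, he⟩, rfl⟩
  rw [List.length_replicate] at hl hdr
  have hrep : List.replicate (n + 1) q = List.replicate n q ++ [q] := List.replicate_succ'
  refine ⟨v ++ [q], ⟨?_, ?_, ?_, ?_, ?_⟩, ?_⟩
  · have h1 : v.drop (n - n₀) ++ [q] ∈ N.Orb q := by
      rw [hdr]
      refine right_mem_Orb (x := (List.replicate n q).take (n - n₀)) ?_
      rw [← List.append_assoc, List.take_append_drop, ← hrep]
      exact replicate_mem_Orb _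
    have h2 := Orb_glue hrev hd (a := v.take (n - n₀)) (x := v.drop (n - n₀)) (v := [q])
      (by simp; omega) (by simpa using hv) h1
    rwa [← List.append_assoc, List.take_append_drop] at h2
  · simp [hl]
  · rw [hrep, List.take_append_of_le_length (by omega),
      List.take_append_of_le_length (by simp; omega), ht]
  · rw [List.length_replicate, hrep]
    have hdrop : ∀ l : List S, l.length = n →
        (l ++ [q]).drop (n + 1 - n₀) = (l.drop (n - n₀) ++ [q]).drop 1 := by
      intro l hl
      rw [show n + 1 - n₀ = n - n₀ + 1 by omega, ← List.drop_drop,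
        List.drop_append_of_le_length (l₁ := l) (by omega)]
    rw [hdrop v hl, hdrop _ List.length_replicate, hdr]
  · rw [hrep]
    exact he.append (Eqv.refl N [q])
  · rw [List.take_append_of_le_length (by omega)]

end Count

/-! ### The growth dichotomy -/

section Growth

variable {S A : Type*} {N : Mealy S A} {q : S}

/-- The set `Cls N q n₀ w` is a fibre of this map on a level of the orbit language. -/
theorem Lev_ncard_eq [Finite S] (hinv : N.Invertible) (hrev : N.Reversible) (n₀ n : ℕ) :
    (N.Lev q n).ncard = N.clsCard q n₀ n *
      ((fun w : List S => (N.PMmk w, w.take n₀, w.drop (n - n₀))) '' N.Lev q n).ncard := by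
  refine ncard_eq_mul_of_fiber (Lev_finite n) _ _ ?_
  rintro w ⟨hw, rfl⟩
  rw [← ncard_Cls hinv hrev n₀ hw]
  congr 1
  ext v
  simp only [Lev, Cls, Set.mem_ofPred_eq, Prod.mk.injEq, PMmk_eq_iff]
  tauto

/-- The letter output by a word of states reading a single letter. -/
def outL (N : Mealy S A) : List S → A → A
  | [], a => a
  | q :: s, a => N.o q (N.outL s a)

theorem actW_singleton (s : List S) (a : A) : N.actW s [a] = [N.outL s a] := by
  induction s with
  | nil => rfl
  | cons q s ih => simp [actW, ih, outL, actA]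

theorem actW_cons (s : List S) (a : A) (u : List A) :
    N.actW s (a :: u) = N.outL s a :: N.actW (N.stW s [a]) u := by
  have := N.actW_append s [a] u
  rwa [actW_singleton] at this

/-- If the orbit of `qⁿ` has at most `B` elements in `P_N`, then `qⁿ` acts as a state of some
automaton with `B + 1` states. -/
theorem exists_small_automaton [Finite S] [Nonempty A] (B n : ℕ)
    (hB : (N.PMmk '' N.Lev q n).ncard ≤ B) :
    ∃ c : Mealy (Fin (B + 1)) A × Fin (B + 1),
      ∀ u, c.1.actA c.2 u = N.actW (List.replicate n q) u := by
  classical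
  have hfin : (N.PMmk '' N.Lev q n).Finite := (Lev_finite n).image _
  obtain ⟨f, -, hf⟩ := Set.Finite.exists_injOn_of_encard_le (β := Fin (B + 1))
    (t := Set.univ) hfin (by
      rw [← hfin.cast_ncard_eq, Set.encard_univ]
      simp only [ENat.card_eq_coe_fintype_card, Fintype.card_fin]
      exact_mod_cast hB.trans (Nat.le_succ B))
  let c : Mealy (Fin (B + 1)) A := ⟨fun i a =>
    if h : ∃ w, w ∈ N.Lev q n ∧ f (N.PMmk w) = i then
      (N.outL h.choose a, f (N.PMmk (N.stW h.choose [a])))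
    else (a, i)⟩
  have key : ∀ (u : List A) (w : List S), w ∈ N.Lev q n →
      c.actA (f (N.PMmk w)) u = N.actW w u := by
    intro u
    induction u with
    | nil => intro w _; rw [actW_nil_right]; rfl
    | cons a u ih =>
      intro w hw
      have h : ∃ v, v ∈ N.Lev q n ∧ f (N.PMmk v) = f (N.PMmk w) := ⟨w, hw, rfl⟩
      have hstep : c.step (f (N.PMmk w)) a =
          (N.outL h.choose a, f (N.PMmk (N.stW h.choose [a]))) := dif_pos h
      have he : N.Eqv h.choose w := (PMmk_eq_iff N _ _).1
        (hf ⟨_, h.choose_spec.1, rfl⟩ ⟨_, hw, rfl⟩ h.choose_spec.2)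
      have ho : N.outL h.choose a = N.outL w a := by
        have := he [a]
        rw [actW_singleton, actW_singleton] at this
        simpa using this
      have ht : N.PMmk (N.stW h.choose [a]) = N.PMmk (N.stW w [a]) :=
        (PMmk_eq_iff N _ _).2 (he.stW [a])
      rw [actW_cons, actA, o, t, hstep, ho, ht,
        ih _ ⟨stW_mem_Orb hw.1 _, (N.stW_length _ _).trans hw.2⟩]
  exact ⟨(c, f (N.PMmk (List.replicate n q))), fun u =>
    key u _ ⟨replicate_mem_Orb n, List.length_replicate⟩⟩

/-- There are only finitely many automata with boundedly many states, so bounded orbits force a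
coincidence between powers of `q`. -/
theorem exists_pow_eqv_of_bounded [Finite S] [Finite A] [Nonempty A] (B m : ℕ)
    (hB : ∀ n, m ≤ n → (N.PMmk '' N.Lev q n).ncard ≤ B) :
    ∃ i j, i ≠ j ∧ N.Eqv (List.replicate i q) (List.replicate j q) := by
  choose c hc using fun n => exists_small_automaton B (m + n) (hB (m + n) (by omega))
  have hstep : Function.Injective (Mealy.step : Mealy (Fin (B + 1)) A → _) := by
    rintro ⟨f⟩ ⟨g⟩ h
    exact congrArg Mealy.mk h
  have : Finite (Mealy (Fin (B + 1)) A) := Finite.of_injective _ hstep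
  obtain ⟨i, j, hij, h⟩ := Finite.exists_ne_map_eq_of_infinite c
  refine ⟨m + i, m + j, by omega, fun u => ?_⟩
  rw [← hc, ← hc, h]

/-- The key dichotomy: the orbit of `qⁿ` in `P_N` is either bounded, which forces two powers of `q`
to coincide, or grows exponentially. -/
theorem exists_exponential [Finite S] [Finite A] [Nonempty A] (hinv : N.Invertible)
    (hrev : N.Reversible)
    (hq : ∀ i j, i ≠ j → ¬ N.Eqv (List.replicate i q) (List.replicate j q)) :
    ∃ c ρ : ℝ, 0 < c ∧ 1 < ρ ∧ ∃ n₁ : ℕ, ∀ m : ℕ,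
      c * ρ ^ m ≤ ((N.PMmk '' {w | w.length = n₁ + m}).ncard : ℝ) := by
  obtain ⟨n₀, -, hd⟩ := exists_stable_of_antitone (N.extDeg q) 0
    fun n _ => extDeg_antitone (Nat.le_succ n)
  set d := N.extDeg q n₀ with hd_def
  set R := {l : List S | l.length ≤ n₀ + 1}.ncard with hR
  obtain ⟨n₁, hn₁, hr⟩ := exists_stable_of_antitone (fun n => R - N.inDeg q n₀ n) (n₀ + 1)
    fun n hn => Nat.sub_le_sub_left (inDeg_le_succ hrev hd hn) R
  set r := N.inDeg q n₀ n₁ with hr_def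
  have hr' : ∀ n, n₁ ≤ n → N.inDeg q n₀ n = r := by
    intro n hn
    have h1 : R - N.inDeg q n₀ n = R - r := hr n hn
    have h2 : N.inDeg q n₀ n ≤ R := inDeg_bounded n₀ n
    have h3 : r ≤ R := inDeg_bounded n₀ n₁
    omega
  have hrpos : 0 < r := inDeg_pos n₀ n₁
  -- `z n` counts the classes on level `n`.
  set F : ℕ → List S → N.PM × List S × List S :=
    fun n w => (N.PMmk w, w.take n₀, w.drop (n - n₀)) with hF
  set z : ℕ → ℕ := fun n => (F n '' N.Lev q n).ncard with hz
  have hzpos : ∀ n, 0 < z n := fun n => (Set.ncard_pos ((Lev_finite n).image _)).2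
    ⟨_, _, ⟨replicate_mem_Orb n, List.length_replicate⟩, rfl⟩
  have hrec : ∀ n, n₁ ≤ n → r * z (n + 1) = d * z n := by
    intro n hn
    have h1 : (N.Lev q n).ncard = N.clsCard q n₀ n * z n := Lev_ncard_eq hinv hrev n₀ n
    have h2 : (N.Lev q (n + 1)).ncard = N.clsCard q n₀ (n + 1) * z (n + 1) :=
      Lev_ncard_eq hinv hrev n₀ (n + 1)
    rw [Lev_ncard_succ hrev, hd n (by omega), h1, clsCard_succ hinv hrev hd (by omega),
      hr' (n + 1) (by omega)] at h2
    refine Nat.eq_of_mul_eq_mul_left (clsCard_pos (N := N) (q := q) n₀ n) ?_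
    linarith
  -- Each element of `P_N` on level `n` splits into boundedly many classes.
  set T : Set (List S) := {l | l.length ≤ n₀} with hT
  have hTfin : T.Finite := List.finite_length_le S n₀
  have hEz : ∀ n, (N.PMmk '' N.Lev q n).ncard ≤ z n := by
    intro n
    have : N.PMmk '' N.Lev q n = Prod.fst '' (F n '' N.Lev q n) := by
      rw [Set.image_image]
    rw [this]
    exact Set.ncard_image_le ((Lev_finite n).image _)
  have hzE : ∀ n, z n ≤ (N.PMmk '' N.Lev q n).ncard * (T.ncard * T.ncard) := by
    intro n
    rw [← Set.ncard_prod, ← Set.ncard_prod]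
    refine Set.ncard_le_ncard ?_ (((Lev_finite n).image _).prod (hTfin.prod hTfin))
    rintro _ ⟨w, hw, rfl⟩
    refine ⟨⟨w, hw, rfl⟩, ?_, ?_⟩
    · simp [hF, hT]
    · have := hw.2
      simp [hF, hT]
      omega
  by_cases hdr : d ≤ r
  · exfalso
    have hle : ∀ m, z (n₁ + m) ≤ z n₁ := by
      intro m
      induction m with
      | zero => exact le_rfl
      | succ m ih =>
        have h1 := hrec (n₁ + m) (by omega)
        have h2 : r * z (n₁ + m + 1) ≤ r * z (n₁ + m) := by
          rw [h1]; exact Nat.mul_le_mul_right _ hdr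
        exact (Nat.le_of_mul_le_mul_left h2 hrpos).trans ih
    obtain ⟨i, j, hij, h⟩ := exists_pow_eqv_of_bounded (N := N) (q := q) (z n₁) n₁ (by
      intro n hn
      obtain ⟨m, rfl⟩ := Nat.exists_eq_add_of_le hn
      exact (hEz _).trans (hle m))
    exact hq i j hij h
  · push Not at hdr
    have hr0 : (0 : ℝ) < r := by exact_mod_cast hrpos
    have hTpos : 0 < T.ncard := (Set.ncard_pos hTfin).2 ⟨[], by simp [hT]⟩
    have hK : (0 : ℝ) < T.ncard * T.ncard := by positivity
    refine ⟨1 / (T.ncard * T.ncard), d / r, by positivity, ?_, n₁, fun m => ?_⟩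
    · rw [one_lt_div hr0]
      exact_mod_cast hdr
    · have hpow : ((d : ℝ) / r) ^ m ≤ z (n₁ + m) := by
        induction m with
        | zero =>
          have := hzpos n₁
          simp only [pow_zero, Nat.add_zero]
          exact_mod_cast this
        | succ m ih =>
          have h1 : (r : ℝ) * z (n₁ + m + 1) = d * z (n₁ + m) := by
            exact_mod_cast hrec (n₁ + m) (by omega)
          have h2 : (z (n₁ + (m + 1)) : ℝ) = d / r * z (n₁ + m) := by
            rw [← Nat.add_assoc]
            field_simp
            linarith
          rw [h2, pow_succ, mul_comm]
          gcongr
      have h3 : (z (n₁ + m) : ℝ) ≤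
          ((N.PMmk '' N.Lev q (n₁ + m)).ncard : ℝ) * (T.ncard * T.ncard) := by
        exact_mod_cast hzE (n₁ + m)
      have h4 : (N.PMmk '' N.Lev q (n₁ + m)).ncard ≤
          (N.PMmk '' {w | w.length = n₁ + m}).ncard :=
        Set.ncard_le_ncard (Set.image_mono fun w hw => hw.2)
          ((List.finite_length_eq S _).image _)
      calc 1 / ((T.ncard : ℝ) * T.ncard) * (d / r) ^ m
          ≤ 1 / ((T.ncard : ℝ) * T.ncard) *
            (((N.PMmk '' N.Lev q (n₁ + m)).ncard : ℝ) * (T.ncard * T.ncard)) := by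
              gcongr
              exact hpow.trans h3
        _ = ((N.PMmk '' N.Lev q (n₁ + m)).ncard : ℝ) := by field_simp
        _ ≤ _ := by exact_mod_cast h4

end Growth

/-! ### Reduction to a reversible automaton with a state of infinite order -/

section Reduction

/-- The automaton whose states are the words of length `k` over the states of `N`. -/
def power {S A : Type*} (N : Mealy S A) (k : ℕ) : Mealy {l : List S // l.length = k} A where
  step s a := (N.outL s.1 a, ⟨N.stW s.1 [a], (N.stW_length _ _).trans s.2⟩)

section Power

variable {S A : Type*} {N : Mealy S A}

theorem power_actA (k : ℕ) (s : {l : List S // l.length = k}) (u : List A) :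
    (N.power k).actA s u = N.actW s.1 u := by
  induction u generalizing s with
  | nil => rw [actW_nil_right]; rfl
  | cons a u ih => rw [actW_cons, actA, ih]; rfl

theorem power_invertible [Finite A] (hinv : N.Invertible) (k : ℕ) :
    (N.power k).Invertible := by
  intro s
  refine Finite.injective_iff_bijective.1 fun a b h => ?_
  have h' : N.outL s.1 a = N.outL s.1 b := h
  have : N.actW s.1 [a] = N.actW s.1 [b] := by rw [actW_singleton, actW_singleton, h']
  simpa using actW_injective hinv s.1 this

theorem power_reversible [Finite S] (hrev : N.Reversible) (k : ℕ) :
    (N.power k).Reversible := by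
  intro a
  have : Finite {l : List S // l.length = k} := (List.finite_length_eq S k).to_subtype
  refine Finite.injective_iff_bijective.1 fun s t h => Subtype.ext ?_
  exact stW_injective hrev [a] (congrArg Subtype.val h)

end Power

variable {Q A : Type*} {M : Mealy Q A}

/-- If `q` has finite order, then no transition out of another state has both the same output
letter and the same target state as a transition out of `q`. Indeed all words in the orbit of a
trivial power `qᵐ⁺¹` act trivially, and pulling `qᵐ⁺¹ @ a` back along `a'` produces such a word
of the form `qᵐ q'`. -/
theorem transition_injective [Finite Q] (hinv : M.Invertible) (hrev : M.Reversible)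
    {q q' : Q} {a a' : A} {m : ℕ} (hm : M.Eqv (List.replicate (m + 1) q) [])
    (ho : M.o q a = M.o q' a') (ht : M.t q a = M.t q' a') : q = q' := by
  -- `v` is the word of the orbit of `qᵐ⁺¹` that `a'` sends to `qᵐ⁺¹ @ a`.
  set w₀ := M.stW (List.replicate (m + 1) q) [a] with hw₀
  obtain ⟨u', -, hu'⟩ := exists_stW_return hrev w₀ [a']
  set v := M.stW w₀ u' with hv
  have hv_triv : M.Eqv v [] := (hm.stW [a]).stW u'
  have hw₀_eq : w₀ = M.stW (List.replicate m q) [M.o q a] ++ [M.t q a] := by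
    rw [hw₀, List.replicate_succ', stW_append_states]
    rfl
  obtain h | ⟨y, q'', h⟩ := List.eq_nil_or_concat v
  · have := congrArg List.length h
    simp [hv, hw₀, stW_length] at this
  · rw [List.concat_eq_append] at h
    rw [h, stW_append_states, hw₀_eq] at hu'
    obtain ⟨h1, h2⟩ := List.append_inj' hu' (by simp [stW_length])
    have h3 : M.t q'' a' = M.t q' a' := by
      rw [← ht]
      simpa [stW, stA, actW] using h2
    obtain rfl := (hrev a').1 h3
    have h4 : M.actW [q''] [a'] = [M.o q a] := by rw [ho]; rfl
    rw [h4] at h1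
    have h5 := stW_injective hrev _ h1
    rw [h, h5] at hv_triv
    rw [List.replicate_succ'] at hm
    have h6 : M.Eqv [q] [q''] :=
      Eqv.cancel_left hinv (s := List.replicate m q) fun u => (hm u).trans (hv_triv u).symm
    have h7 : M.o q a = M.o q'' a := by simpa [actW, actA] using h6 [a]
    obtain rfl := (hinv q'').1 (h7.symm.trans ho)
    exact (hrev a).1 ht

variable [Nonempty A]

theorem enriched_actA_inl (q : Q) (u : List A) :
    M.enriched.actA (Sum.inl q) u = M.actA q u := by
  induction u generalizing q with
  | nil => rfl
  | cons a u ih => exact congrArg _ (ih _)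

theorem enriched_invertible [Finite A] (hinv : M.Invertible) : M.enriched.Invertible := by
  rintro (q | q)
  · exact hinv q
  · refine Finite.injective_iff_bijective.1 fun a b h => ?_
    have h' : Function.invFun (M.o q) a = Function.invFun (M.o q) b := h
    rw [← Function.rightInverse_invFun (hinv q).2 a, h',
      Function.rightInverse_invFun (hinv q).2 b]

/-- If every state has finite order, then the enriched automaton is reversible. -/
theorem enriched_reversible [Finite Q] (hinv : M.Invertible) (hrev : M.Reversible)
    (hfin : ∀ q, ∃ m, M.Eqv (List.replicate (m + 1) q) []) : M.enriched.Reversible := by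
  intro b
  refine Finite.injective_iff_bijective.1 ?_
  rintro (q | q) (q' | q') h
  · exact congrArg Sum.inl ((hrev b).1 (Sum.inl.inj h))
  · exact absurd h (by simp [enriched, t])
  · exact absurd h (by simp [enriched, t])
  · obtain ⟨m, hm⟩ := hfin q
    have h' := Sum.inr.inj h
    refine congrArg Sum.inr (transition_injective hinv hrev hm ?_ h')
    rw [Function.rightInverse_invFun (hinv q).2 b, Function.rightInverse_invFun (hinv q').2 b]

end Reduction

/-! ### From state words to balls in the enriched group -/

section Ball

variable {P A : Type*}

/-- The elements of `P_E` that are products of at most `n` states. -/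
def ball (E : Mealy P A) (n : ℕ) : Set E.PM := {g | ∃ l : List P, l.length ≤ n ∧ g = E.PMmk l}

theorem ball_finite [Finite P] (E : Mealy P A) (n : ℕ) : (E.ball n).Finite := by
  refine ((List.finite_length_le P n).image E.PMmk).subset ?_
  rintro _ ⟨l, hl, rfl⟩
  exact ⟨l, hl, rfl⟩

theorem ball_mono [Finite P] (E : Mealy P A) {m n : ℕ} (h : m ≤ n) :
    (E.ball m).ncard ≤ (E.ball n).ncard :=
  Set.ncard_le_ncard (fun _ ⟨l, hl, hg⟩ => ⟨l, hl.trans h, hg⟩) (E.ball_finite n)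

/-- If the states of `N` act as words of length `k` over the states of `E`, then products of `n`
states of `N` embed into the ball of radius `k * n` of `P_E`. -/
theorem ncard_image_le_ball [Finite P] {S : Type*} (N : Mealy S A) (E : Mealy P A) (k : ℕ)
    (φ : S → List P) (hφ : ∀ s, (φ s).length = k) (hact : ∀ s u, N.actA s u = E.actW (φ s) u)
    (n : ℕ) : (N.PMmk '' {w | w.length = n}).ncard ≤ (E.ball (k * n)).ncard := by
  have hW : ∀ (w : List S) (u : List A), N.actW w u = E.actW (w.flatMap φ) u := by
    intro w u
    induction w with
    | nil => rfl
    | cons s w ih => rw [actW, ih, hact, List.flatMap_cons, actW_append_states]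
  have hlen : ∀ w : List S, (w.flatMap φ).length = k * w.length := by
    intro w
    induction w with
    | nil => rfl
    | cons s w ih => rw [List.flatMap_cons, List.length_append, ih, hφ, List.length_cons]; ring
  have hsub : (fun w : List S => E.PMmk (w.flatMap φ)) '' {w | w.length = n} ⊆ E.ball (k * n) := by
    rintro _ ⟨w, rfl, rfl⟩
    exact ⟨_, (hlen w).le, rfl⟩
  refine (ncard_image_le_of_factors _ _ (fun w : List S => E.PMmk (w.flatMap φ))
    ((E.ball_finite _).subset hsub) fun v w h => ?_).trans
    (Set.ncard_le_ncard hsub (E.ball_finite _))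
  rw [PMmk_eq_iff] at h ⊢
  intro u
  rw [hW, hW, h u]

theorem PMmk_replicate_flatten (E : Mealy P A) (l : List P) (n : ℕ) :
    E.PMmk (List.replicate n l).flatten = E.PMmk l ^ n := by
  induction n with
  | zero => exact E.PMmk_nil
  | succ n ih => rw [List.replicate_succ, List.flatten_cons, PMmk_append, ih, pow_succ']

/-- If the powers of an element coincide once, the sequence of powers is eventually periodic. -/
theorem pow_ne_of_infiniteOrder {G : Type*} [Monoid G] {x : G} (hx : InfiniteOrder x) {i j : ℕ}
    (hij : i ≠ j) : x ^ i ≠ x ^ j := by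
  wlog h : i < j generalizing i j
  · exact (this hij.symm (by omega)).symm
  intro he
  refine hx (((Set.finite_lt_nat j).image fun n => x ^ n).subset ?_)
  rintro _ ⟨n, rfl⟩
  have : ∀ n, ∃ m, m < j ∧ x ^ m = x ^ n := by
    intro n
    induction n using Nat.strong_induction_on with
    | _ n ih =>
      by_cases hn : n < j
      · exact ⟨n, hn, rfl⟩
      · obtain ⟨m, hm, hmn⟩ := ih (i + (n - j)) (by omega)
        refine ⟨m, hm, hmn.trans ?_⟩
        rw [pow_add, he, ← pow_add, Nat.add_sub_cancel' (by omega)]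
  exact this (n + 1)

/-- Exponentially many elements in the balls whose radii form an arithmetic progression. -/
theorem exists_ball_growth {Q : Type*} [Finite Q] [Finite A] [Nonempty A] {M : Mealy Q A}
    (hinv : M.Invertible) (hrev : M.Reversible) (hx : ∃ x : M.enriched.PM, InfiniteOrder x) :
    ∃ (k n₁ : ℕ) (c ρ : ℝ), 0 < c ∧ 1 < ρ ∧
      ∀ m : ℕ, c * ρ ^ m ≤ ((M.enriched.ball (k * (n₁ + m))).ncard : ℝ) := by
  by_cases hfin : ∀ q, ∃ m, M.Eqv (List.replicate (m + 1) q) []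
  · obtain ⟨x, hx⟩ := hx
    obtain ⟨l, rfl⟩ : ∃ l, M.enriched.PMmk l = x := by
      obtain ⟨w, rfl⟩ := Con.mk'_surjective x
      exact ⟨w.toList, rfl⟩
    have hErev := enriched_reversible hinv hrev hfin
    have hEinv := enriched_invertible hinv
    have : Finite {v : List (Q ⊕ Q) // v.length = l.length} :=
      (List.finite_length_eq _ l.length).to_subtype
    have hact : ∀ n u, (M.enriched.power l.length).actW (List.replicate n ⟨l, rfl⟩) u =
        M.enriched.actW (List.replicate n l).flatten u := by
      intro n u
      induction n with
      | zero => rfl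
      | succ n ih =>
        rw [List.replicate_succ, List.replicate_succ, List.flatten_cons, actW_append_states,
          actW, ih, power_actA]
    obtain ⟨c, ρ, hc, hρ, n₁, h⟩ := exists_exponential (q := ⟨l, rfl⟩)
      (power_invertible hEinv l.length) (power_reversible hErev l.length) (by
        intro i j hij he
        refine pow_ne_of_infiniteOrder hx hij ?_
        rw [← PMmk_replicate_flatten, ← PMmk_replicate_flatten, PMmk_eq_iff]
        intro u
        rw [← hact, ← hact, he u])
    refine ⟨l.length, n₁, c, ρ, hc, hρ, fun m => (h m).trans ?_⟩
    exact_mod_cast ncard_image_le_ball _ M.enriched l.length Subtype.val (fun s => s.2)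
      (fun s u => power_actA _ s u) (n₁ + m)
  · push Not at hfin
    obtain ⟨q, hq⟩ := hfin
    have key : ∀ i j, i < j → ¬ M.Eqv (List.replicate i q) (List.replicate j q) := by
      intro i j hij he
      obtain ⟨m, rfl⟩ : ∃ m, j = i + (m + 1) := ⟨j - i - 1, by omega⟩
      rw [List.replicate_add] at he
      refine hq m (Eqv.cancel_left hinv (s := List.replicate i q) fun u => ?_)
      rw [List.append_nil, he u]
    obtain ⟨c, ρ, hc, hρ, n₁, h⟩ := exists_exponential (q := q) hinv hrev (by
      intro i j hij he
      rcases Nat.lt_or_gt_of_ne hij with h | h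
      · exact key i j h he
      · exact key j i h fun u => (he u).symm)
    refine ⟨1, n₁, c, ρ, hc, hρ, fun m => (h m).trans ?_⟩
    exact_mod_cast ncard_image_le_ball M M.enriched 1 (fun q => [Sum.inl q]) (fun _ => rfl)
      (fun s u => (enriched_actA_inl s u).symm) (n₁ + m)

/-- A ball of radius one with a single element forces all balls to be trivial. -/
theorem ball_trivial [Finite P] (E : Mealy P A) (h : (E.ball 1).ncard ≤ 1) (n : ℕ) :
    (E.ball n).ncard ≤ 1 := by
  have h1 : ∀ p : P, E.PMmk [p] = 1 := by
    intro p
    rw [Set.ncard_le_one (E.ball_finite 1)] at h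
    exact h _ ⟨[p], le_rfl, rfl⟩ _ ⟨[], by simp, E.PMmk_nil.symm⟩
  have h2 : ∀ l : List P, E.PMmk l = 1 := by
    intro l
    induction l with
    | nil => exact E.PMmk_nil
    | cons p l ih =>
      have := E.PMmk_append [p] l
      rw [h1, ih, one_mul] at this
      exact this
  rw [Set.ncard_le_one (E.ball_finite n)]
  rintro _ ⟨l, -, rfl⟩ _ ⟨l', -, rfl⟩
  rw [h2, h2]

end Ball

/-- Exponential growth along an arithmetic progression of radii gives a uniform exponential lower
bound for a nondecreasing sequence that is at least `2` from `1` on. -/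
theorem exists_uniform_base (b : ℕ → ℕ) (hb : Monotone b) (h1 : 2 ≤ b 1) (k n₁ : ℕ) (c ρ : ℝ)
    (hc : 0 < c) (hρ : 1 < ρ) (h : ∀ m : ℕ, c * ρ ^ m ≤ b (k * (n₁ + m))) :
    ∃ C : ℝ, 1 < C ∧ ∀ n : ℕ, 1 ≤ n → C ^ n ≤ b n := by
  obtain ⟨t, ht⟩ := pow_unbounded_of_one_lt 2 hρ
  obtain ⟨t₀, ht₀⟩ := pow_unbounded_of_one_lt (2 / c) hρ
  -- The step `T` is chosen so that `b (T * j) ≥ 2 ^ (j + 1)` for all `j ≥ 1`.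
  set T := k * (n₁ + t₀ + t) + 1 with hT
  have hTj : ∀ j, 1 ≤ j → (2 : ℝ) ^ (j + 1) ≤ b (T * j) := by
    intro j hj
    have hle : k * (n₁ + (t₀ + t * j)) ≤ T * j := by
      have : n₁ + (t₀ + t * j) ≤ (n₁ + t₀ + t) * j := by nlinarith
      calc k * (n₁ + (t₀ + t * j)) ≤ k * ((n₁ + t₀ + t) * j) := Nat.mul_le_mul_left _ this
        _ ≤ T * j := by rw [hT, ← mul_assoc, add_mul]; omega
    have h2 : (2 : ℝ) ≤ c * ρ ^ t₀ := by
      rw [div_lt_iff₀ hc] at ht₀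
      linarith
    calc (2 : ℝ) ^ (j + 1) = 2 * 2 ^ j := by ring
      _ ≤ (c * ρ ^ t₀) * (ρ ^ t) ^ j := by gcongr
      _ = c * ρ ^ (t₀ + t * j) := by rw [pow_add, pow_mul]; ring
      _ ≤ b (k * (n₁ + (t₀ + t * j))) := h _
      _ ≤ b (T * j) := by exact_mod_cast hb hle
  have hTpos : 0 < T := by omega
  have hC : ((2 : ℝ) ^ ((T : ℝ)⁻¹)) ^ T = 2 := Real.rpow_inv_natCast_pow (by norm_num) hTpos.ne'
  have hC1 : (1 : ℝ) < 2 ^ ((T : ℝ)⁻¹) := Real.one_lt_rpow (by norm_num) (by positivity)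
  refine ⟨2 ^ ((T : ℝ)⁻¹), hC1, fun n hn => ?_⟩
  have hlt : n ≤ T * (n / T + 1) := (Nat.lt_mul_div_succ n hTpos).le
  have hub : ((2 : ℝ) ^ ((T : ℝ)⁻¹)) ^ n ≤ 2 ^ (n / T + 1) := by
    calc ((2 : ℝ) ^ ((T : ℝ)⁻¹)) ^ n ≤ ((2 : ℝ) ^ ((T : ℝ)⁻¹)) ^ (T * (n / T + 1)) :=
          pow_le_pow_right₀ hC1.le hlt
      _ = 2 ^ (n / T + 1) := by rw [pow_mul, hC]
  refine hub.trans ?_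
  rcases Nat.eq_zero_or_pos (n / T) with h0 | h0
  · rw [h0]
    have : 2 ≤ b n := h1.trans (hb hn)
    simpa using (by exact_mod_cast this : (2 : ℝ) ≤ b n)
  · exact (hTj _ h0).trans (by exact_mod_cast hb (Nat.mul_div_le n T))

end Mealy

/-- If the group generated by an invertible and reversible Mealy automaton
(the automaton semigroup of the enriched automaton, generated by the images of the enriched
states) contains an element of infinite order, then it has exponential growth. -/
theorem stmt1 {Q A : Type*} [Fintype Q] [Nonempty Q] [Fintype A] [Nonempty A]
    (M : Mealy Q A) (hinv : M.Invertible) (hrev : M.Reversible)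
    (hx : ∃ x : (M.enriched).PM, InfiniteOrder x) :
    ∃ c : ℝ, 1 < c ∧ ∀ n : ℕ, 1 ≤ n →
      c ^ n ≤ (({g : (M.enriched).PM |
        ∃ l : List (Q ⊕ Q), l.length ≤ n ∧ g = (M.enriched).PMmk l}).ncard : ℝ) := by
  obtain ⟨k, n₁, c, ρ, hc, hρ, h⟩ := Mealy.exists_ball_growth hinv hrev hx
  have hb : Monotone fun n => (M.enriched.ball n).ncard := fun _ _ => M.enriched.ball_mono
  refine Mealy.exists_uniform_base (fun n => (M.enriched.ball n).ncard) hb ?_ k n₁ c ρ hc hρ h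
  by_contra! hlt
  have htriv := M.enriched.ball_trivial (Nat.le_of_lt_succ hlt)
  obtain ⟨t, ht⟩ := pow_unbounded_of_one_lt (1 / c) hρ
  rw [div_lt_iff₀ hc] at ht
  have h1 : ((M.enriched.ball (k * (n₁ + t))).ncard : ℝ) ≤ 1 := by exact_mod_cast htriv _
  linarith [h t]

end AutGrp
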